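/- Let n ≥ 1, 1 ≤ p < ∞ and 0 ≤ λ ≤ n. If f belongs to the homogeneous Morrey space L^{p,λ}(ℝⁿ) and satisfies the vanishing property (V^∞), and φ ∈ L¹(ℝⁿ), then the convolution f ∗ φ belongs to L^{p,λ}(ℝⁿ) and satisfies (V^∞). -/

import Mathlib

/-!
The inequality behind the theorem is, for every fixed radius `r`,
`sup_x 𝔐(f ∗ φ; x, r) ≤ ‖φ‖₁ ^ p * sup_x 𝔐(f; x, r)`.
Jensen's inequality for the measure `|φ| dz` gives
`|f ∗ φ|(y) ^ p ≤ ‖φ‖₁ ^ (p - 1) * ∫ |f (y - z)| ^ p |φ z| dz`; integrating over `y ∈ B(x, r)`,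
swapping the integrals and translating the ball to `B(x - z, r)` yields the claim
(`lintegral_ball_conv_rpow_le`). Both the boundedness and the vanishing at infinity of the Morrey
quantity pass through this inequality.

A subtlety is that `LocIntPow` makes `|f| ^ p` measurable, but not `f` itself, and `f ∗ φ` takes
the junk value `0` at the points where its integrand fails to be measurable. The convolution is
a.e. measurable nevertheless (`aestronglyMeasurable_conv`). Let `D` be the intersection of the
measurable hulls of `{f > 0}` and `{f < 0}`. Off `D` the function `f` coincides with an
a.e. measurable function `g`, whereas `f` is not a.e. measurable on any non-null measurable subset
of `D` (`measure_hulls_inter_support_eq_zero`). Hence `f ∗ φ` equals `g ∗ φ` on the null measurable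
set of those `x` for which `φ` vanishes a.e. on `x - D`, and is `0` elsewhere.
-/

open MeasureTheory Metric Filter Topology

/-- The Morrey quantity `𝔐_{p,λ}(f;x,r) = r^{-λ} ∫_{B(x,r)} |f(y)|^p dy`. -/
noncomputable def morreyM (n : ℕ) (p lam : ℝ) (f : EuclideanSpace ℝ (Fin n) → ℝ)
    (x : EuclideanSpace ℝ (Fin n)) (r : ℝ) : ℝ :=
  r ^ (-lam) * ∫ y in ball x r, |f y| ^ p

/-- Local `p`-integrability: `|f|^p` is integrable on every ball. -/
def LocIntPow (n : ℕ) (p : ℝ) (f : EuclideanSpace ℝ (Fin n) → ℝ) : Prop :=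
  ∀ (x : EuclideanSpace ℝ (Fin n)) (r : ℝ), 0 < r →
    IntegrableOn (fun y => |f y| ^ p) (ball x r) volume

/-- Membership in the homogeneous Morrey space `L^{p,λ}(ℝⁿ)`. -/
def MemMorrey (n : ℕ) (p lam : ℝ) (f : EuclideanSpace ℝ (Fin n) → ℝ) : Prop :=
  LocIntPow n p f ∧ ∃ C : ℝ, ∀ x r, 0 < r → morreyM n p lam f x r ≤ C

/-- The homogeneous Morrey norm `‖f‖_{p,λ}`. -/
noncomputable def morreyNorm (n : ℕ) (p lam : ℝ) (f : EuclideanSpace ℝ (Fin n) → ℝ) : ℝ :=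
  sSup {c : ℝ | ∃ x r, 0 < r ∧ c = morreyM n p lam f x r} ^ (1 / p)

/-- The vanishing property `(V⁰)` at the origin. -/
def VZero (n : ℕ) (p lam : ℝ) (f : EuclideanSpace ℝ (Fin n) → ℝ) : Prop :=
  Tendsto (fun r : ℝ => ⨆ x, morreyM n p lam f x r) (nhdsWithin 0 (Set.Ioi 0)) (nhds 0)

/-- The vanishing property `(V^∞)` at infinity. -/
def VInfty (n : ℕ) (p lam : ℝ) (f : EuclideanSpace ℝ (Fin n) → ℝ) : Prop :=
  Tendsto (fun r : ℝ => ⨆ x, morreyM n p lam f x r) atTop (nhds 0)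

/-- `𝒜_{N,p}(f) = sup_x ∫_{B(x,1)} |f(y)|^p χ_{{|y| ≥ N}}(y) dy`. -/
noncomputable def morreyA (n : ℕ) (p : ℝ) (N : ℝ) (f : EuclideanSpace ℝ (Fin n) → ℝ) : ℝ :=
  ⨆ x, ∫ y in ball x 1 ∩ {y : EuclideanSpace ℝ (Fin n) | N ≤ ‖y‖}, |f y| ^ p

/-- The vanishing property `(V*)`. -/
def VStar (n : ℕ) (p : ℝ) (f : EuclideanSpace ℝ (Fin n) → ℝ) : Prop :=
  Tendsto (fun N : ℕ => morreyA n p (N : ℝ) f) atTop (nhds 0)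

/-- Convolution `(f ∗ g)(x) = ∫ f(x - z) g(z) dz`. -/
noncomputable def conv (n : ℕ) (f g : EuclideanSpace ℝ (Fin n) → ℝ)
    (x : EuclideanSpace ℝ (Fin n)) : ℝ :=
  ∫ z, f (x - z) * g z

/-! ### Measurability of the convolution -/

section Measurability

lemma measure_toMeasurable_inter_eq_zero {α : Type*} [MeasurableSpace α] {μ : Measure α}
    [SFinite μ] {s B : Set α} (hB : NullMeasurableSet B μ) (h : s ∩ B = ∅) :
    μ (toMeasurable μ s ∩ B) = 0 := by
  obtain ⟨B', hsub, hB'm, hae⟩ := hB.exists_measurable_subset_ae_eq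
  have h1 : μ (toMeasurable μ s ∩ B) = μ (toMeasurable μ s ∩ B') :=
    measure_congr ((ae_eq_refl _).inter hae.symm)
  rw [h1, Measure.measure_toMeasurable_inter_of_sFinite hB'm]
  have : s ∩ B' = ∅ := by
    rw [← Set.subset_empty_iff, ← h]
    exact Set.inter_subset_inter_right _ hsub
  simp [this]

/-- A function that becomes a.e. measurable after multiplication by `ψ` has a measurable sign where
`ψ ≠ 0`, so there the measurable hulls of its positivity and negativity sets are a.e. disjoint. -/
lemma measure_hulls_inter_support_eq_zero {α : Type*} [MeasurableSpace α] {μ : Measure α}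
    [SFinite μ] {f ψ : α → ℝ} (hψ : AEStronglyMeasurable ψ μ)
    (hv : AEStronglyMeasurable (fun y => f y * ψ y) μ) :
    μ (toMeasurable μ {y | 0 < f y} ∩ toMeasurable μ {y | f y < 0} ∩ {y | ψ y ≠ 0}) = 0 := by
  have hm : AEMeasurable (fun y => f y * ψ y * ψ y) μ := (hv.mul hψ).aemeasurable
  have hB1 : NullMeasurableSet {y | 0 < f y * ψ y * ψ y} μ :=
    nullMeasurableSet_lt aemeasurable_const hm
  have hB2 : NullMeasurableSet ({y | f y * ψ y * ψ y ≤ 0} ∩ {y | ψ y ≠ 0}) μ :=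
    (nullMeasurableSet_le hm aemeasurable_const).inter
      (hψ.aemeasurable.nullMeasurable (measurableSet_singleton (0 : ℝ)).compl)
  have e1 : {y | f y < 0} ∩ {y | 0 < f y * ψ y * ψ y} = ∅ := by
    ext y
    simp only [Set.mem_inter_iff, Set.mem_ofPred_eq, Set.mem_empty_iff_false, iff_false, not_and]
    intro h
    nlinarith [mul_self_nonneg (ψ y)]
  have e2 : {y | 0 < f y} ∩ ({y | f y * ψ y * ψ y ≤ 0} ∩ {y | ψ y ≠ 0}) = ∅ := by
    ext y
    simp only [Set.mem_inter_iff, Set.mem_ofPred_eq, Set.mem_empty_iff_false, iff_false, not_and]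
    intro h h2 h3
    have := mul_pos h (mul_self_pos.2 h3)
    linarith [mul_assoc (f y) (ψ y) (ψ y)]
  refine measure_mono_null ?_ (measure_union_null
    (measure_toMeasurable_inter_eq_zero hB1 e1) (measure_toMeasurable_inter_eq_zero hB2 e2))
  rintro y ⟨⟨hp, hn⟩, hy⟩
  rcases lt_or_ge 0 (f y * ψ y * ψ y) with h | h
  · exact Or.inl ⟨hn, h⟩
  · exact Or.inr ⟨hp, h, hy⟩

lemma aemeasurable_comp_sub {n : ℕ} {β : Type*} [MeasurableSpace β]
    {F : EuclideanSpace ℝ (Fin n) → β} (hF : AEMeasurable F) :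
    AEMeasurable (fun q : EuclideanSpace ℝ (Fin n) × EuclideanSpace ℝ (Fin n) => F (q.1 - q.2))
      (volume.prod volume) :=
  hF.comp_quasiMeasurePreserving (quasiMeasurePreserving_sub_of_right_invariant volume volume)

/-- Measurability of the convolution, where only `|f|` is assumed to be measurable. -/
lemma aestronglyMeasurable_conv (n : ℕ) (f φ : EuclideanSpace ℝ (Fin n) → ℝ)
    (hf : AEMeasurable (fun y => |f y|)) (hφ : AEStronglyMeasurable φ) :
    AEStronglyMeasurable (conv n f φ) := by
  set P := toMeasurable volume {y | 0 < f y} with hP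
  set N := toMeasurable volume {y | f y < 0} with hN
  have hPm : MeasurableSet P := measurableSet_toMeasurable _ _
  have hNm : MeasurableSet N := measurableSet_toMeasurable _ _
  set g : EuclideanSpace ℝ (Fin n) → ℝ :=
    fun y => P.indicator (fun y => |f y|) y - N.indicator (fun y => |f y|) y with hg
  have hgm : AEMeasurable g := (hf.indicator hPm).sub (hf.indicator hNm)
  have hfg : ∀ y, y ∉ P ∩ N → f y = g y := by
    intro y hy
    have h1 : y ∉ P → f y ≤ 0 := fun h => by
      by_contra h'
      exact h (subset_toMeasurable _ _ (not_le.1 h'))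
    have h2 : y ∉ N → 0 ≤ f y := fun h => by
      by_contra h'
      exact h (subset_toMeasurable _ _ (not_le.1 h'))
    by_cases hp : y ∈ P <;> by_cases hn : y ∈ N
    · exact absurd ⟨hp, hn⟩ hy
    · simp [hg, hp, hn, abs_of_nonneg (h2 hn)]
    · simp [hg, hp, hn, abs_of_nonpos (h1 hp)]
    · simpa [hg, hp, hn] using le_antisymm (h1 hp) (h2 hn)
  -- `w x = 0` says that `φ` vanishes a.e. on `x - P ∩ N`.
  set w : EuclideanSpace ℝ (Fin n) → ENNReal :=
    fun x => ∫⁻ z, (P ∩ N).indicator 1 (x - z) * ‖φ z‖ₑ with hw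
  have hind : Measurable ((P ∩ N).indicator (1 : EuclideanSpace ℝ (Fin n) → ENNReal)) :=
    measurable_one.indicator (hPm.inter hNm)
  have hwm : AEMeasurable w := by
    refine AEMeasurable.lintegral_prod_right'
      (f := fun q : EuclideanSpace ℝ (Fin n) × EuclideanSpace ℝ (Fin n) =>
        (P ∩ N).indicator 1 (q.1 - q.2) * ‖φ q.2‖ₑ) ?_
    exact (aemeasurable_comp_sub hind.aemeasurable).mul hφ.comp_snd.enorm
  have hwx : ∀ x, w x = 0 ↔ ∀ᵐ z, x - z ∈ P ∩ N → φ z = 0 := by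
    intro x
    rw [hw]
    simp only
    rw [lintegral_eq_zero_iff']
    · refine eventually_congr (Eventually.of_forall fun z => ?_)
      by_cases h : x - z ∈ P ∩ N
      · simp [h]
      · simp [h]
    · exact (hind.comp (measurable_const.sub measurable_id)).aemeasurable.mul hφ.enorm
  have hgconv : AEStronglyMeasurable (conv n g φ) := by
    refine AEStronglyMeasurable.integral_prod_right'
      (f := fun q : EuclideanSpace ℝ (Fin n) × EuclideanSpace ℝ (Fin n) =>
        g (q.1 - q.2) * φ q.2) ?_
    exact (aemeasurable_comp_sub hgm).aestronglyMeasurable.mul hφ.comp_snd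
  have hS : NullMeasurableSet {x | w x = 0} :=
    hwm.nullMeasurable (measurableSet_singleton 0)
  have key : conv n f φ = {x | w x = 0}.indicator (conv n g φ) := by
    funext x
    by_cases hx : w x = 0
    · rw [Set.indicator_of_mem (by exact hx)]
      refine integral_congr_ae ?_
      filter_upwards [(hwx x).1 hx] with z hz
      by_cases h : x - z ∈ P ∩ N
      · simp [hz h]
      · simp only [hfg _ h]
    · rw [Set.indicator_of_notMem (by exact hx)]
      refine integral_undef fun hint => hx ((hwx x).2 ?_)
      have mp : MeasurePreserving (fun y : EuclideanSpace ℝ (Fin n) => x - y) volume volume :=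
        Measure.measurePreserving_sub_left volume x
      have hψ : AEStronglyMeasurable (fun y => φ (x - y)) :=
        hφ.comp_measurePreserving mp
      have hv : AEStronglyMeasurable (fun y => f y * φ (x - y)) := by
        simpa [Function.comp_def] using hint.aestronglyMeasurable.comp_measurePreserving mp
      have h0 := measure_hulls_inter_support_eq_zero hψ hv
      have h1 : ∀ᵐ y, y ∈ P ∩ N → φ (x - y) = 0 := by
        rw [ae_iff]
        refine measure_mono_null (fun y hy => ?_) h0
        simp only [Set.mem_ofPred_eq, Classical.not_imp] at hy
        exact hy
      filter_upwards [mp.quasiMeasurePreserving.ae h1] with z hz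
      simpa using hz
  rw [key]
  exact hgconv.indicator₀ hS

end Measurability

/-! ### Young's inequality on balls -/

section Estimate

lemma lintegral_mul_rpow_le {α : Type*} [MeasurableSpace α] {μ : Measure α} {p : ℝ} (hp : 1 ≤ p)
    {F Φ : α → ENNReal} (hF : AEMeasurable F μ) (hΦ : AEMeasurable Φ μ) :
    (∫⁻ z, F z * Φ z ∂μ) ^ p ≤ (∫⁻ z, F z ^ p * Φ z ∂μ) * (∫⁻ z, Φ z ∂μ) ^ (p - 1) := by
  have hp0 : 0 < p := by linarith
  have hFν : AEMeasurable F (μ.withDensity Φ) :=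
    hF.mono_ac (withDensity_absolutelyContinuous _ _)
  have h := eLpNorm'_le_eLpNorm'_mul_rpow_measure_univ one_pos hp hFν.aestronglyMeasurable
  simp only [eLpNorm', enorm_eq_self, ENNReal.rpow_one, div_one] at h
  rw [lintegral_withDensity_eq_lintegral_mul₀ hΦ hF,
    lintegral_withDensity_eq_lintegral_mul₀ hΦ (hF.pow_const p),
    withDensity_apply _ MeasurableSet.univ, Measure.restrict_univ] at h
  have h2 := ENNReal.rpow_le_rpow h hp0.le
  rw [ENNReal.mul_rpow_of_nonneg _ _ hp0.le, ← ENNReal.rpow_mul, ← ENNReal.rpow_mul] at h2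
  have e1 : 1 / p * p = 1 := by field_simp
  have e2 : (1 - 1 / p) * p = p - 1 := by field_simp
  rw [e1, e2, ENNReal.rpow_one] at h2
  simpa only [Pi.mul_apply, mul_comm] using h2

/-- Young's inequality on balls of a fixed radius `r`. -/
lemma lintegral_ball_conv_rpow_le {n : ℕ} {p : ℝ} (hp : 1 ≤ p)
    {F Φ : EuclideanSpace ℝ (Fin n) → ENNReal} (hF : AEMeasurable F) (hΦ : AEMeasurable Φ)
    {r : ℝ} {K : ENNReal} (hK : ∀ x, ∫⁻ y in ball x r, F y ^ p ≤ K)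
    (x : EuclideanSpace ℝ (Fin n)) :
    ∫⁻ y in ball x r, (∫⁻ z, F (y - z) * Φ z) ^ p ≤ K * (∫⁻ z, Φ z) ^ p := by
  have hmeas : AEMeasurable
      (fun q : EuclideanSpace ℝ (Fin n) × EuclideanSpace ℝ (Fin n) => F (q.1 - q.2) ^ p * Φ q.2)
      ((volume.restrict (ball x r)).prod volume) := by
    refine AEMeasurable.mono_measure (μ := volume.prod volume) ?_
      (Measure.prod_mono Measure.restrict_le_self le_rfl)
    exact ((aemeasurable_comp_sub hF).pow_const p).mul hΦ.comp_snd
  have htrans : ∀ z, ∫⁻ y in ball x r, F (y - z) ^ p ≤ K := by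
    intro z
    have mp : MeasurePreserving (fun y : EuclideanSpace ℝ (Fin n) => y - z) volume volume :=
      measurePreserving_sub_right volume z
    have me : MeasurableEmbedding (fun y : EuclideanSpace ℝ (Fin n) => y - z) :=
      (MeasurableEquiv.subRight z).measurableEmbedding
    have := mp.setLIntegral_comp_preimage_emb me (fun y => F y ^ p) (ball (x - z) r)
    have hpre : (fun y : EuclideanSpace ℝ (Fin n) => y - z) ⁻¹' ball (x - z) r = ball x r := by
      ext y
      simp [dist_eq_norm]
    rw [hpre] at this
    rw [this]
    exact hK _
  calc ∫⁻ y in ball x r, (∫⁻ z, F (y - z) * Φ z) ^ p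
      ≤ ∫⁻ y in ball x r, (∫⁻ z, F (y - z) ^ p * Φ z) * (∫⁻ z, Φ z) ^ (p - 1) := by
        refine lintegral_mono fun y => lintegral_mul_rpow_le hp ?_ hΦ
        exact hF.comp_quasiMeasurePreserving
          (Measure.measurePreserving_sub_left volume y).quasiMeasurePreserving
    _ = (∫⁻ z, ∫⁻ y in ball x r, F (y - z) ^ p * Φ z) * (∫⁻ z, Φ z) ^ (p - 1) := by
        rw [lintegral_mul_const'' _ hmeas.lintegral_prod_right', lintegral_lintegral_swap hmeas]
    _ ≤ (∫⁻ z, K * Φ z) * (∫⁻ z, Φ z) ^ (p - 1) := by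
        gcongr with z
        rw [lintegral_mul_const'']
        · gcongr
          exact htrans z
        · refine AEMeasurable.restrict ?_
          exact (hF.comp_quasiMeasurePreserving
            (measurePreserving_sub_right volume z).quasiMeasurePreserving).pow_const p
    _ = K * (∫⁻ z, Φ z) ^ p := by
        rw [lintegral_const_mul'' _ hΦ, mul_assoc]
        congr 1
        nth_rewrite 1 [← ENNReal.rpow_one (∫⁻ z, Φ z)]
        rw [← ENNReal.rpow_add_of_nonneg _ _ zero_le_one (by linarith)]
        congr 1
        ring

end Estimate

/-! ### The Morrey quantity of a convolution -/

section Morrey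

variable {n : ℕ} {p lam : ℝ} {f φ : EuclideanSpace ℝ (Fin n) → ℝ}

lemma enorm_rpow_eq_ofReal (hp : 1 ≤ p) (a : ℝ) : ‖a‖ₑ ^ p = ENNReal.ofReal (|a| ^ p) := by
  rw [Real.enorm_eq_ofReal_abs, ENNReal.ofReal_rpow_of_nonneg (abs_nonneg a) (by linarith)]

lemma LocIntPow.aemeasurable_abs (hp : 1 ≤ p) (hf : LocIntPow n p f) :
    AEMeasurable (fun y => |f y|) := by
  have hloc : LocallyIntegrable (fun y => |f y| ^ p) := fun x =>
    ⟨ball x 1, ball_mem_nhds x one_pos, hf x 1 one_pos⟩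
  have h := hloc.aestronglyMeasurable.aemeasurable.pow_const (1 / p)
  refine h.congr (Eventually.of_forall fun y => ?_)
  have hp0 : p ≠ 0 := by linarith
  simp only [one_div]
  exact Real.rpow_rpow_inv (abs_nonneg _) hp0

lemma morreyM_nonneg {x : EuclideanSpace ℝ (Fin n)} {r : ℝ} (hr : 0 < r) :
    0 ≤ morreyM n p lam f x r :=
  mul_nonneg (Real.rpow_nonneg hr.le _)
    (integral_nonneg fun _ => Real.rpow_nonneg (abs_nonneg _) _)

/-- At a fixed radius, a bound on the Morrey quantity of `f` that is uniform in the centre passes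
to `f ∗ φ`, with the factor `‖φ‖₁ ^ p`. -/
lemma morreyM_conv_le (hp : 1 ≤ p) (hf : LocIntPow n p f) (hφ : Integrable φ) {r S : ℝ}
    (hr : 0 < r) (hS : ∀ x, morreyM n p lam f x r ≤ S) (x : EuclideanSpace ℝ (Fin n)) :
    IntegrableOn (fun y => |conv n f φ y| ^ p) (ball x r) ∧
      morreyM n p lam (conv n f φ) x r ≤ (∫ z, ‖φ z‖) ^ p * S := by
  have hp0 : 0 ≤ p := by linarith
  have hS0 : 0 ≤ S := (morreyM_nonneg hr).trans (hS x)
  have hI0 : 0 ≤ ∫ z, ‖φ z‖ := integral_nonneg fun _ => norm_nonneg _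
  have habs := hf.aemeasurable_abs hp
  have hF : AEMeasurable (fun y => ‖f y‖ₑ) := by
    simpa only [Real.enorm_eq_ofReal_abs] using habs.ennreal_ofReal
  have hrl : r ^ lam * r ^ (-lam) = 1 := by
    rw [← Real.rpow_add hr]
    simp
  have hK : ∀ x, ∫⁻ y in ball x r, ‖f y‖ₑ ^ p ≤ ENNReal.ofReal (r ^ lam * S) := by
    intro x
    simp only [enorm_rpow_eq_ofReal hp]
    rw [← ofReal_integral_eq_lintegral_ofReal (hf x r hr)
      (Eventually.of_forall fun _ => Real.rpow_nonneg (abs_nonneg _) _)]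
    refine ENNReal.ofReal_le_ofReal ?_
    have := mul_le_mul_of_nonneg_left (hS x) (Real.rpow_nonneg hr.le lam)
    rwa [morreyM, ← mul_assoc, hrl, one_mul] at this
  have hmain := lintegral_ball_conv_rpow_le hp hF hφ.aestronglyMeasurable.enorm hK x
  have hbound : ∫⁻ y in ball x r, ENNReal.ofReal (|conv n f φ y| ^ p) ≤
      ENNReal.ofReal (r ^ lam * S * (∫ z, ‖φ z‖) ^ p) := by
    rw [ENNReal.ofReal_mul (mul_nonneg (Real.rpow_nonneg hr.le _) hS0),
      ← ENNReal.ofReal_rpow_of_nonneg hI0 hp0, ofReal_integral_norm_eq_lintegral_enorm hφ]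
    refine le_trans (lintegral_mono fun y => ?_) hmain
    rw [← enorm_rpow_eq_ofReal hp]
    refine ENNReal.rpow_le_rpow ?_ hp0
    refine (enorm_integral_le_lintegral_enorm _).trans_eq ?_
    simp only [enorm_mul]
  have hmeas : AEStronglyMeasurable (fun y => |conv n f φ y| ^ p) (volume.restrict (ball x r)) :=
    ((aestronglyMeasurable_conv n f φ habs hφ.aestronglyMeasurable).aemeasurable.abs.pow_const
      p).aestronglyMeasurable.restrict
  have hnn : ∀ᵐ y ∂(volume.restrict (ball x r)), 0 ≤ |conv n f φ y| ^ p :=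
    Eventually.of_forall fun _ => Real.rpow_nonneg (abs_nonneg _) _
  refine ⟨⟨hmeas, ?_⟩, ?_⟩
  · rw [hasFiniteIntegral_iff_ofReal hnn]
    exact hbound.trans_lt ENNReal.ofReal_lt_top
  · rw [morreyM, integral_eq_lintegral_of_nonneg_ae hnn hmeas]
    have h1 := ENNReal.toReal_mono ENNReal.ofReal_ne_top hbound
    rw [ENNReal.toReal_ofReal (mul_nonneg (mul_nonneg (Real.rpow_nonneg hr.le _) hS0)
      (Real.rpow_nonneg hI0 _))] at h1
    refine (mul_le_mul_of_nonneg_left h1 (Real.rpow_nonneg hr.le (-lam))).trans_eq ?_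
    linear_combination (S * (∫ z, ‖φ z‖) ^ p) * hrl

end Morrey

theorem vinfty_convolution_invariant (n : ℕ) (hn : 1 ≤ n) (p lam : ℝ)
    (hp : 1 ≤ p) (hl0 : 0 ≤ lam) (hln : lam ≤ (n : ℝ))
    (f φ : EuclideanSpace ℝ (Fin n) → ℝ)
    (hf : MemMorrey n p lam f) (hfi : VInfty n p lam f) (hφ : Integrable φ) :
    MemMorrey n p lam (conv n f φ) ∧ VInfty n p lam (conv n f φ) := by
  obtain ⟨hloc, C, hC⟩ := hf
  refine ⟨⟨fun x r hr => (morreyM_conv_le hp hloc hφ hr (fun x => hC x r hr) x).1,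
    (∫ z, ‖φ z‖) ^ p * C,
    fun x r hr => (morreyM_conv_le hp hloc hφ hr (fun x => hC x r hr) x).2⟩, ?_⟩
  have hlim : Tendsto (fun r : ℝ => (∫ z, ‖φ z‖) ^ p * ⨆ x, morreyM n p lam f x r)
      atTop (nhds 0) := by
    simpa using hfi.const_mul ((∫ z, ‖φ z‖) ^ p)
  refine tendsto_of_tendsto_of_tendsto_of_le_of_le' tendsto_const_nhds hlim ?_ ?_
  · filter_upwards [eventually_gt_atTop 0] with r hr
    exact Real.iSup_nonneg fun x => morreyM_nonneg hr
  · filter_upwards [eventually_gt_atTop 0] with r hr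
    -- The bound `C` makes the real supremum genuine rather than a junk value.
    have hbdd : BddAbove (Set.range fun x => morreyM n p lam f x r) :=
      ⟨C, by rintro _ ⟨x, rfl⟩; exact hC x r hr⟩
    exact ciSup_le fun x => (morreyM_conv_le hp hloc hφ hr (fun x => le_ciSup hbdd x) x).2
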